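/- arXiv:1608.06728 — 2 statements merged into one kernel-verified Lean document; each statement's English description precedes it below -/
import Mathlib

section
/- There exists a constant C > 0, depending only on ψ, such that for every dyadic interval I ⊆ ℝ with |I| ≤ 1, every x ∈ ℝ and every y > 0, |F_I(x+iy)| ≤ C |I|^{-1/2} · (1 + (y/|I|)²) / (1 + ((x - C_I)/|I|)²) · e^{-2πy/3} / y^{1/2}. -/
open MeasureTheory Complex Real
open scoped FourierTransform

noncomputable section

/-- The length `|I| = 2^{-j}` of a dyadic interval of generation `j`. -/
def len (j : ℤ) : ℝ := (2 : ℝ) ^ (-j)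

/-- The center `C_I = 2^{-j}(k + 1/2)` of the dyadic interval `I = [2^{-j}k, 2^{-j}(k+1))`. -/
def ctr (j k : ℤ) : ℝ := (2 : ℝ) ^ (-j) * ((k : ℝ) + 1 / 2)

/-- `ψ_I(x) = |I|^{-1/2} ψ((x - C_I)/|I|)`. -/
def psiI (ψ : SchwartzMap ℝ ℂ) (j k : ℤ) (x : ℝ) : ℂ :=
  (((Real.sqrt (len j))⁻¹ : ℝ) : ℂ) * ψ ((x - ctr j k) / len j)

/-- The Poisson extension to the upper half-plane of `f_I = |I|^{1/2} D ψ_I`, where `D` is the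
Fourier multiplier with symbol `4π|ξ|`:
`F_I(x+iy) = ∫ 4π|ξ| |I|^{1/2} ψ̂_I(ξ) e^{-2π|ξ|y} e^{2πixξ} dξ`. -/
def FI (ψ : SchwartzMap ℝ ℂ) (j k : ℤ) (x y : ℝ) : ℂ :=
  ∫ ξ : ℝ, ((4 * π * |ξ| * Real.sqrt (len j) * Real.exp (-(2 * π * |ξ| * y)) : ℝ) : ℂ) *
    𝓕 (psiI ψ j k) ξ * Complex.exp (2 * (π : ℂ) * Complex.I * (x : ℂ) * (ξ : ℂ))

/-- The periodization `G_I(x+iy) = Σ_{k∈ℤ} F_I(x-k+iy)`. -/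
def GI (ψ : SchwartzMap ℝ ℂ) (j k : ℤ) (x y : ℝ) : ℂ :=
  ∑' m : ℤ, FI ψ j k (x - (m : ℝ)) y

/-!
By affine covariance `F_I` is a rescaled copy of the Poisson extension of `Dψ`. That extension
splits into the contributions of positive and negative frequencies, and each is a Laplace transform
`z ↦ ∫ e^{zη} f(η) dη` of a Schwartz function `f`, namely `𝓕 (ψ')` or its reflection, taken over
`η > a`, where `(-a, a)` is the spectral gap of `ψ`, at `z = 2π(±ix - y)`. Cauchy–Schwarz against
`‖e^{zη}‖_{L²(a, ∞)} = e^{a Re z} / √(-2 Re z)` produces the factor `e^{-2πay} / √y`.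
As `f` vanishes to infinite order at `a`, two integrations by parts give `z²` times the transform
of `f` as the transform of `f''`, whence the factor `1 / (1 + x²)`.
-/

section HalfLineLaplace

open Set Filter Topology SchwartzMap

variable {E : Type*} [NormedAddCommGroup E] [NormedSpace ℂ E]

/-- The Laplace transform `z ↦ ∫_a^∞ e^{zη} f(η) dη` of `f` restricted to the half-line `(a, ∞)`,
with the sign convention for which it converges in the left half-plane. -/
def laplaceIoi (a : ℝ) (f : ℝ → E) (z : ℂ) : E :=
  ∫ η in Ioi a, cexp (z * η) • f η

lemma norm_cexp_mul_ofReal (z : ℂ) (η : ℝ) : ‖cexp (z * η)‖ = rexp (z.re * η) := by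
  simp [Complex.norm_exp]

lemma norm_cexp_mul_ofReal_sq (z : ℂ) (η : ℝ) : ‖cexp (z * η)‖ ^ 2 = rexp (2 * z.re * η) := by
  rw [norm_cexp_mul_ofReal, ← Real.exp_nat_mul]
  congr 1
  push_cast
  ring

variable {f f' : ℝ → E} {z : ℂ} {a : ℝ}

lemma memLp_two_cexp_mul_Ioi (hz : z.re < 0) (a : ℝ) :
    MemLp (fun η : ℝ ↦ cexp (z * η)) 2 (volume.restrict (Ioi a)) := by
  rw [memLp_two_iff_integrable_sq_norm (by fun_prop : Continuous _).aestronglyMeasurable]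
  simp only [norm_cexp_mul_ofReal_sq]
  exact integrableOn_exp_mul_Ioi (by linarith) a

lemma sqrt_setIntegral_norm_cexp_mul_sq (hz : z.re < 0) (a : ℝ) :
    √(∫ η in Ioi a, ‖cexp (z * η)‖ ^ 2) = rexp (z.re * a) / √(-2 * z.re) := by
  have hexp : rexp (2 * z.re * a) = rexp (z.re * a) ^ 2 := by
    rw [← Real.exp_nat_mul]
    congr 1
    push_cast
    ring
  simp only [norm_cexp_mul_ofReal_sq]
  rw [integral_exp_mul_Ioi (by linarith), neg_div, ← div_neg, hexp,
    Real.sqrt_div (sq_nonneg _), Real.sqrt_sq (Real.exp_pos _).le, neg_mul]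

lemma integrableOn_cexp_smul (hz : z.re < 0) (hf : MemLp f 2 (volume.restrict (Ioi a))) :
    IntegrableOn (fun η : ℝ ↦ cexp (z * η) • f η) (Ioi a) :=
  memLp_one_iff_integrable.mp (hf.smul (memLp_two_cexp_mul_Ioi hz a))

lemma norm_laplaceIoi_le (hz : z.re < 0) (hf : MemLp f 2 (volume.restrict (Ioi a))) :
    ‖laplaceIoi a f z‖ ≤ √(∫ η in Ioi a, ‖f η‖ ^ 2) * (rexp (z.re * a) / √(-2 * z.re)) := by
  have hexp := memLp_two_cexp_mul_Ioi hz a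
  have cauchy_schwarz := integral_mul_norm_le_Lp_mul_Lq Real.HolderConjugate.two_two
    (by simpa using hexp.norm) (by simpa using hf.norm)
  simp only [norm_norm, Real.rpow_two, ← Real.sqrt_eq_rpow] at cauchy_schwarz
  calc ‖laplaceIoi a f z‖
      ≤ ∫ η in Ioi a, ‖cexp (z * η) • f η‖ := norm_integral_le_integral_norm _
    _ = ∫ η in Ioi a, ‖cexp (z * η)‖ * ‖f η‖ := by simp only [norm_smul]
    _ ≤ √(∫ η in Ioi a, ‖cexp (z * η)‖ ^ 2) * √(∫ η in Ioi a, ‖f η‖ ^ 2) := cauchy_schwarz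
    _ = _ := by rw [sqrt_setIntegral_norm_cexp_mul_sq hz, mul_comm]

lemma laplaceIoi_deriv [CompleteSpace E] (hz : z.re < 0)
    (hderiv : ∀ η ∈ Ici a, HasDerivAt f (f' η) η) (ha : f a = 0)
    (hf : MemLp f 2 (volume.restrict (Ioi a))) (hf' : MemLp f' 2 (volume.restrict (Ioi a))) :
    laplaceIoi a f' z = -z • laplaceIoi a f z := by
  have hprod : ∀ η ∈ Ici a, HasDerivAt (fun η : ℝ ↦ cexp (z * η) • f η)
      (cexp (z * η) • f' η + z • cexp (z * η) • f η) η := by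
    intro η hη
    have hcexp : HasDerivAt (fun η : ℝ ↦ cexp (z * η)) (cexp (z * η) * z) η := by
      simpa using (((hasDerivAt_id (η : ℂ)).const_mul z).cexp).comp_ofReal
    simpa only [smul_smul, mul_comm z] using! hcexp.smul (hderiv η hη)
  have hint := integrableOn_cexp_smul hz hf
  have hint' := integrableOn_cexp_smul hz hf'
  have hintz : IntegrableOn (fun η : ℝ ↦ z • cexp (z * η) • f η) (Ioi a) := hint.smul z
  have hsum := hint'.add hintz
  have hlim := tendsto_zero_of_hasDerivAt_of_integrableOn_Ioi
    (fun η hη ↦ hprod η (Ioi_subset_Ici_self hη)) hsum hint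
  have hftc := integral_Ioi_of_hasDerivAt_of_tendsto' hprod hsum hlim
  rw [integral_add hint' hintz, integral_smul, ha, smul_zero, sub_zero] at hftc
  rw [neg_smul]
  exact eq_neg_of_add_eq_zero_left hftc

lemma deriv_eventuallyEq_zero_nhdsLT (hzero : f =ᶠ[𝓝[<] a] 0) : deriv f =ᶠ[𝓝[<] a] 0 := by
  filter_upwards [eventually_eventually_nhdsWithin.mpr hzero, self_mem_nhdsWithin] with η hη hηa
  rw [isOpen_Iio.nhdsWithin_eq hηa] at hη
  have hη : f =ᶠ[𝓝 η] 0 := hη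
  simp [hη.deriv_eq]

lemma laplaceIoi_derivCLM [CompleteSpace E] (f : 𝓢(ℝ, E)) (hzero : f =ᶠ[𝓝[<] a] 0)
    (hz : z.re < 0) : laplaceIoi a (derivCLM ℂ E f) z = -z • laplaceIoi a f z := by
  have ha : f a = 0 := tendsto_nhds_unique
    (f.continuous.continuousAt.tendsto.mono_left nhdsWithin_le_nhds)
    (tendsto_const_nhds.congr' hzero.symm)
  exact laplaceIoi_deriv hz (fun η _ ↦ f.hasDerivAt η) ha ((f.memLp 2).restrict _)
    (((derivCLM ℂ E f).memLp 2).restrict _)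

lemma exists_norm_laplaceIoi_le [CompleteSpace E] (f : 𝓢(ℝ, E)) (hzero : f =ᶠ[𝓝[<] a] 0) :
    ∃ C, 0 ≤ C ∧ ∀ z : ℂ, z.re < 0 →
      ‖laplaceIoi a f z‖ ≤ C / (1 + ‖z‖ ^ 2) * (rexp (z.re * a) / √(-2 * z.re)) := by
  let f₂ := derivCLM ℂ E (derivCLM ℂ E f)
  let N (g : ℝ → E) : ℝ := √(∫ η in Ioi a, ‖g η‖ ^ 2)
  refine ⟨N f + N f₂, by positivity, fun z hz ↦ ?_⟩
  have hf₂ : laplaceIoi a f₂ z = z ^ 2 • laplaceIoi a f z := by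
    have hzero' : derivCLM ℂ E f =ᶠ[𝓝[<] a] 0 := deriv_eventuallyEq_zero_nhdsLT hzero
    rw [laplaceIoi_derivCLM _ hzero' hz, laplaceIoi_derivCLM f hzero hz, smul_smul, neg_mul_neg, sq]
  have hbound := norm_laplaceIoi_le hz ((f.memLp 2).restrict (Ioi a))
  have hbound₂ := norm_laplaceIoi_le hz ((f₂.memLp 2).restrict (Ioi a))
  rw [hf₂, norm_smul, norm_pow] at hbound₂
  rw [div_mul_eq_mul_div, le_div_iff₀ (by positivity)]
  linarith

end HalfLineLaplace

section PoissonExtension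

open Set Filter Topology SchwartzMap

variable {E : Type*} [NormedAddCommGroup E] [NormedSpace ℂ E]

/-- The value at `x + iy` of the Poisson extension of `D g`, where `D` is the Fourier multiplier
with symbol `4π|ξ|`; the Poisson factor and the character are merged into one exponential. -/
def poissonD (g : ℝ → E) (x y : ℝ) : E :=
  ∫ ξ : ℝ, (((4 * π * |ξ| : ℝ) : ℂ) * cexp (2 * π * (I * x * ξ - |ξ| * y))) • 𝓕 g ξ

lemma fourier_comp_sub_div (g : ℝ → E) (c : ℝ) {L : ℝ} (hL : 0 < L) (ξ : ℝ) :
    𝓕 (fun v ↦ g ((v - c) / L)) ξ = (L * cexp (-(2 * π * c * ξ) * I)) • 𝓕 g (L * ξ) := by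
  let h (w : ℝ) : E := cexp (↑(-2 * π * (L * w + c) * ξ) * I) • g w
  have hcomp (v : ℝ) :
      cexp (↑(-2 * π * v * ξ) * I) • g ((v - c) / L) = h ((v - c) / L) := by
    simp only [h]
    rw [mul_div_cancel₀ _ hL.ne', sub_add_cancel]
  have hphase (w : ℝ) :
      h w = cexp (-(2 * π * c * ξ) * I) • cexp (↑(-2 * π * w * (L * ξ)) * I) • g w := by
    simp only [h]
    rw [smul_smul, ← Complex.exp_add]
    congr 2
    push_cast
    ring
  rw [Real.fourier_real_eq_integral_exp_smul, Real.fourier_real_eq_integral_exp_smul]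
  simp only [hcomp]
  rw [integral_sub_right_eq_self (fun v ↦ h (v / L)) c, Measure.integral_comp_div, abs_of_pos hL]
  simp only [hphase]
  rw [integral_smul, ← Complex.coe_smul, smul_smul]

lemma poissonD_comp_sub_div (g : ℝ → E) (c : ℝ) {L : ℝ} (hL : 0 < L) (x y : ℝ) :
    poissonD (fun v ↦ g ((v - c) / L)) x y = L⁻¹ • poissonD g ((x - c) / L) (y / L) := by
  have hLne : (L : ℂ) ≠ 0 := by exact_mod_cast hL.ne'
  unfold poissonD
  rw [← abs_of_pos (inv_pos.mpr hL), ← Measure.integral_comp_mul_left]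
  refine integral_congr_ae (.of_forall fun ξ ↦ ?_)
  simp only [fourier_comp_sub_div g c hL, smul_smul, abs_mul, abs_of_pos hL]
  congr 1
  have hphase : 2 * π * (I * ↑((x - c) / L) * ↑(L * ξ) - ↑(L * |ξ|) * ↑(y / L))
      = 2 * π * (I * x * ξ - |ξ| * y) + -(2 * π * c * ξ) * I := by
    push_cast
    field_simp
    ring
  rw [hphase, Complex.exp_add]
  push_cast
  ring

lemma fourier_derivCLM_apply (g : 𝓢(ℝ, E)) (ξ : ℝ) :
    𝓕 (derivCLM ℂ E g) ξ = (2 * π * I * ξ) • 𝓕 ⇑g ξ :=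
  congrFun (Real.fourier_deriv g.integrable g.differentiable (derivCLM ℂ E g).integrable) ξ

lemma fourierInv_derivCLM_apply (g : 𝓢(ℝ, E)) (ξ : ℝ) :
    𝓕⁻ (derivCLM ℂ E g) ξ = -(2 * π * I * ξ) • 𝓕 ⇑g (-ξ) := by
  have h := fourier_derivCLM_apply g (-ξ)
  rwa [ofReal_neg, mul_neg] at h

lemma integrable_poissonD (g : 𝓢(ℝ, E)) (x : ℝ) {y : ℝ} (hy : 0 ≤ y) :
    Integrable fun ξ : ℝ ↦
      (((4 * π * |ξ| : ℝ) : ℂ) * cexp (2 * π * (I * x * ξ - |ξ| * y))) • 𝓕 ⇑g ξ := by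
  have hcont : Continuous (𝓕 ⇑g) := (𝓕 g).continuous
  refine ((𝓕 (derivCLM ℂ E g)).integrable.norm.const_mul 2).mono'
    (by fun_prop : Continuous _).aestronglyMeasurable (.of_forall fun ξ ↦ ?_)
  have hexp : ‖cexp (2 * π * (I * x * ξ - |ξ| * y))‖ ≤ 1 := by
    have hre : (2 * π * (I * x * ξ - |ξ| * y) : ℂ).re = -(2 * π * (|ξ| * y)) := by simp
    rw [Complex.norm_exp, Real.exp_le_one_iff, hre, neg_nonpos]
    positivity
  calc ‖(((4 * π * |ξ| : ℝ) : ℂ) * cexp (2 * π * (I * x * ξ - |ξ| * y))) • 𝓕 ⇑g ξ‖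
      = ‖cexp (2 * π * (I * x * ξ - |ξ| * y))‖ * (2 * ‖𝓕 (derivCLM ℂ E g) ξ‖) := by
        rw [fourier_derivCLM_apply]
        simp only [norm_smul, Complex.norm_mul, norm_real, Complex.norm_ofNat, norm_I,
          Real.norm_eq_abs, abs_mul, abs_abs, abs_of_pos pi_pos, Nat.abs_ofNat, mul_one]
        ring
    _ ≤ 2 * ‖𝓕 (derivCLM ℂ E g) ξ‖ := mul_le_of_le_one_left (by positivity) hexp

lemma integral_eq_setIntegral_Ioi_neg_add {f : ℝ → E} {a : ℝ} (ha : 0 < a) (hf : Integrable f)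
    (hgap : ∀ ξ, |ξ| < a → f ξ = 0) :
    ∫ ξ, f ξ = (∫ ξ in Ioi a, f (-ξ)) + ∫ ξ in Ioi a, f ξ := by
  have hright : ∫ ξ in Ioi (-a), f ξ = ∫ ξ in Ioi a, f ξ := by
    have hsub : Ici a ⊆ Ioi (-a) := Ici_subset_Ioi.mpr (by linarith)
    rw [← integral_Ici_eq_integral_Ioi (x := a)]
    refine setIntegral_eq_of_subset_of_forall_sdiff_eq_zero measurableSet_Ioi hsub
      fun ξ hξ ↦ hgap ξ ?_
    exact abs_lt.mpr ⟨hξ.1, not_le.mp hξ.2⟩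
  rw [integral_comp_neg_Ioi, ← hright,
    intervalIntegral.integral_Iic_add_Ioi hf.integrableOn hf.integrableOn]

/- On each half-line `4π|ξ| 𝓕 g ξ` is, up to sign and the factor `2i`, the Fourier transform of
`g'`, so each half of the spectrum contributes a Laplace transform of a Schwartz function. -/
lemma poissonD_eq_laplaceIoi_sub (g : 𝓢(ℝ, E)) {a : ℝ} (ha : 0 < a)
    (hgap : ∀ ξ, |ξ| < a → 𝓕 ⇑g ξ = 0) (x : ℝ) {y : ℝ} (hy : 0 ≤ y) :
    poissonD g x y = (2 * I) •
      (laplaceIoi a (𝓕⁻ (derivCLM ℂ E g) : 𝓢(ℝ, E)) (2 * π * (-x * I - y)) -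
        laplaceIoi a (𝓕 (derivCLM ℂ E g) : 𝓢(ℝ, E)) (2 * π * (x * I - y))) := by
  rw [poissonD, integral_eq_setIntegral_Ioi_neg_add ha (integrable_poissonD g x hy)
    fun ξ hξ ↦ by rw [hgap ξ hξ, smul_zero], smul_sub, sub_eq_add_neg, ← neg_smul]
  unfold laplaceIoi
  rw [← integral_smul, ← integral_smul]
  congr 1 <;> refine setIntegral_congr_fun measurableSet_Ioi fun η (hη : a < η) ↦ ?_
  · have hexp : 2 * π * (I * x * (-η : ℝ) - η * y) = 2 * π * (-x * I - y) * η := by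
      push_cast
      ring
    simp only [fourierInv_derivCLM_apply, abs_neg, abs_of_pos (ha.trans hη), hexp, smul_smul]
    congr 1
    push_cast
    linear_combination (4 * π * η * cexp (2 * π * (-x * I - y) * η)) * I_sq
  · have hexp : 2 * π * (I * x * η - η * y) = 2 * π * (x * I - y) * η := by ring
    simp only [fourier_derivCLM_apply, abs_of_pos (ha.trans hη), hexp, smul_smul]
    congr 1
    push_cast
    linear_combination (4 * π * η * cexp (2 * π * (x * I - y) * η)) * I_sq

lemma exists_norm_laplaceIoi_two_pi_mul_le [CompleteSpace E] (f : 𝓢(ℝ, E)) {a : ℝ}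
    (hzero : f =ᶠ[𝓝[<] a] 0) :
    ∃ C, 0 ≤ C ∧ ∀ x y : ℝ, 0 < y →
      ‖laplaceIoi a f (2 * π * (x * I - y))‖ ≤
        C / (1 + x ^ 2) * (rexp (-(2 * π * a * y)) / √y) := by
  obtain ⟨C, hC, hbound⟩ := exists_norm_laplaceIoi_le f hzero
  refine ⟨C, hC, fun x y hy ↦ ?_⟩
  have hπ : 1 ≤ 2 * π := by linarith [pi_gt_three]
  have hre : (2 * π * (x * I - y) : ℂ).re = -(2 * π * y) := by simp
  have him : (2 * π * (x * I - y) : ℂ).im = 2 * π * x := by simp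
  have hnorm : x ^ 2 ≤ ‖(2 * π * (x * I - y) : ℂ)‖ ^ 2 := by
    rw [← sq_abs x]
    gcongr
    calc |x| ≤ 2 * π * |x| := le_mul_of_one_le_left (abs_nonneg x) hπ
      _ = |(2 * π * (x * I - y) : ℂ).im| := by rw [him, abs_mul, abs_of_pos two_pi_pos]
      _ ≤ _ := abs_im_le_norm _
  calc _ ≤ _ := hbound _ (by rw [hre]; exact neg_neg_of_pos (by positivity))
    _ = C / (1 + ‖(2 * π * (x * I - y) : ℂ)‖ ^ 2) *
          (rexp (-(2 * π * a * y)) / √(2 * (2 * π * y))) := by rw [hre]; ring_nf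
    _ ≤ _ := by
      gcongr
      nlinarith

lemma exists_norm_poissonD_le [CompleteSpace E] (g : 𝓢(ℝ, E)) {a : ℝ} (ha : 0 < a)
    (hgap : ∀ ξ, |ξ| < a → 𝓕 ⇑g ξ = 0) :
    ∃ C, 0 < C ∧ ∀ x y : ℝ, 0 < y →
      ‖poissonD g x y‖ ≤ C / (1 + x ^ 2) * (rexp (-(2 * π * a * y)) / √y) := by
  have hnear : ∀ᶠ ξ in 𝓝[<] a, |ξ| < a :=
    mem_of_superset (Ioo_mem_nhdsLT (neg_lt_self ha)) fun ξ hξ ↦ abs_lt.mpr hξ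
  obtain ⟨C₁, hC₁, hbound₁⟩ := exists_norm_laplaceIoi_two_pi_mul_le (a := a)
    (𝓕⁻ (derivCLM ℂ E g)) (hnear.mono fun ξ hξ ↦ by
      simp [fourierInv_derivCLM_apply, hgap (-ξ) (by rwa [abs_neg])])
  obtain ⟨C₂, hC₂, hbound₂⟩ := exists_norm_laplaceIoi_two_pi_mul_le (a := a)
    (𝓕 (derivCLM ℂ E g)) (hnear.mono fun ξ hξ ↦ by
      simp [fourier_derivCLM_apply, hgap ξ hξ])
  refine ⟨2 * (C₁ + C₂) + 1, by positivity, fun x y hy ↦ ?_⟩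
  have hleft := hbound₁ (-x) y hy
  rw [neg_sq, ofReal_neg] at hleft
  rw [poissonD_eq_laplaceIoi_sub g ha hgap x hy.le, norm_smul]
  calc ‖2 * I‖ * ‖_ - _‖
      ≤ 2 * (C₁ / (1 + x ^ 2) * (rexp (-(2 * π * a * y)) / √y) +
          C₂ / (1 + x ^ 2) * (rexp (-(2 * π * a * y)) / √y)) := by
        gcongr
        · simp
        · exact (norm_sub_le _ _).trans (add_le_add hleft (hbound₂ x y hy))
    _ = 2 * (C₁ + C₂) / (1 + x ^ 2) * (rexp (-(2 * π * a * y)) / √y) := by ring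
    _ ≤ _ := by
        gcongr
        linarith

end PoissonExtension

lemma eq_zero_of_support_subset_Icc_union_Icc {E : Type*} [Zero E] {f : ℝ → E} {a b ξ : ℝ}
    (hf : Function.support f ⊆ Set.Icc (-b) (-a) ∪ Set.Icc a b) (hξ : |ξ| < a) : f ξ = 0 := by
  by_contra hne
  rw [abs_lt] at hξ
  rcases hf hne with hleft | hright
  · linarith [hleft.2]
  · linarith [hright.1]

lemma len_pos (j : ℤ) : 0 < len j := by
  unfold len
  positivity

lemma len_natCast_le_one (j : ℕ) : len j ≤ 1 :=
  zpow_le_one_of_nonpos₀ one_le_two (by simp)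

lemma fourier_psiI (ψ : SchwartzMap ℝ ℂ) (j k : ℤ) (ξ : ℝ) :
    𝓕 (psiI ψ j k) ξ = (√(len j) : ℂ)⁻¹ * 𝓕 (fun v ↦ ψ ((v - ctr j k) / len j)) ξ := by
  simp only [Real.fourier_real_eq_integral_exp_smul, psiI, ← integral_const_mul, smul_eq_mul,
    ofReal_inv]
  congr with v
  ring

lemma FI_eq_poissonD (ψ : SchwartzMap ℝ ℂ) (j k : ℤ) (x y : ℝ) :
    FI ψ j k x y = (len j)⁻¹ • poissonD ψ ((x - ctr j k) / len j) (y / len j) := by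
  have hsqrt : (√(len j) : ℂ) ≠ 0 := by exact_mod_cast (Real.sqrt_pos.mpr (len_pos j)).ne'
  rw [← poissonD_comp_sub_div _ _ (len_pos j), FI, poissonD]
  congr with ξ
  have hexp : cexp (2 * π * (I * x * ξ - |ξ| * y)) =
      rexp (-(2 * π * |ξ| * y)) * cexp (2 * π * I * x * ξ) := by
    rw [ofReal_exp, ← Complex.exp_add]
    congr 1
    push_cast
    ring
  rw [fourier_psiI, hexp, smul_eq_mul]
  push_cast
  field_simp

theorem stmt_11_general (ψ : SchwartzMap ℝ ℂ) {a : ℝ} (ha : 0 < a)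
    (hgap : ∀ ξ, |ξ| < a → 𝓕 ⇑ψ ξ = 0) :
    ∃ C : ℝ, 0 < C ∧ ∀ j k : ℤ, ∀ x y : ℝ, 0 < y →
      ‖FI ψ j k x y‖ ≤ C * (√(len j))⁻¹ * (1 / (1 + ((x - ctr j k) / len j) ^ 2)) *
        (rexp (-(2 * π * a * (y / len j))) / √y) := by
  obtain ⟨C, hC, hbound⟩ := exists_norm_poissonD_le ψ ha hgap
  refine ⟨C, hC, fun j k x y hy ↦ ?_⟩
  have hL := len_pos j
  have hscale : (len j)⁻¹ / √(y / len j) = (√(len j))⁻¹ / √y := by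
    rw [Real.sqrt_div hy.le]
    field_simp
    rw [Real.sq_sqrt hL.le]
  rw [FI_eq_poissonD, norm_smul, Real.norm_of_nonneg (inv_pos.mpr hL).le]
  calc (len j)⁻¹ * ‖poissonD ψ ((x - ctr j k) / len j) (y / len j)‖
      ≤ (len j)⁻¹ * (C / (1 + ((x - ctr j k) / len j) ^ 2) *
          (rexp (-(2 * π * a * (y / len j))) / √(y / len j))) := by
        gcongr
        exact hbound _ _ (div_pos hy hL)
    _ = C / (1 + ((x - ctr j k) / len j) ^ 2) * rexp (-(2 * π * a * (y / len j))) *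
          ((len j)⁻¹ / √(y / len j)) := by ring
    _ = _ := by rw [hscale]; ring

/-- Localization of `F_I`: there is a constant `C > 0`, depending only on `ψ`, such that for
every dyadic interval `I ⊆ ℝ` with `|I| ≤ 1` (i.e. generation `j ≥ 0`), all `x ∈ ℝ` and `y > 0`,
`|F_I(x+iy)| ≤ C |I|^{-1/2} (1+(y/|I|)²)/(1+((x-C_I)/|I|)²) · e^{-2πy/3}/√y`. -/
theorem stmt_11 (ψ : SchwartzMap ℝ ℂ)
    (hsupp : Function.support (𝓕 ⇑ψ) ⊆
      Set.Icc (-(4 / 3) : ℝ) (-(1 / 3)) ∪ Set.Icc (1 / 3) (4 / 3)) :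
    ∃ C : ℝ, 0 < C ∧ ∀ j : ℕ, ∀ k : ℤ, ∀ x y : ℝ, 0 < y →
      ‖FI ψ (j : ℤ) k x y‖
        ≤ C * (Real.sqrt (len (j : ℤ)))⁻¹ *
            ((1 + (y / len (j : ℤ)) ^ 2) / (1 + ((x - ctr (j : ℤ) k) / len (j : ℤ)) ^ 2)) *
            (Real.exp (-(2 * π * y / 3)) / Real.sqrt y) := by
  obtain ⟨C, hC, hbound⟩ := stmt_11_general ψ (by norm_num) fun _ hξ ↦
    eq_zero_of_support_subset_Icc_union_Icc hsupp hξ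
  refine ⟨C, hC, fun j k x y hy ↦ (hbound j k x y hy).trans ?_⟩
  have hdecay : 2 * π * y / 3 ≤ 2 * π * (1 / 3) * (y / len j) := by
    have hscale : y ≤ y / len j := le_div_self hy.le (len_pos j) (len_natCast_le_one j)
    linarith [mul_le_mul_of_nonneg_left hscale pi_pos.le]
  have hL := len_pos j
  gcongr
  exact le_add_of_nonneg_right (sq_nonneg _)
end
end

section
/- Let f : ℝ → ℂ be a Schwartz function. Then for every x ∈ ℝ and y > 0, both of the following series converge absolutely and Σ_{k∈ℤ} (f * P_y)(x - k) = Σ_{n∈ℤ} f̂(n) e^{-2π|n|y} e^{2πinx}. (That is, the Poisson extension of the periodization of f, viewed on the disc via w = e^{2πi(x+iy)}, equals Σ_{n≥0} f̂(n) wⁿ + Σ_{n<0} f̂(n) \bar{w}^{-n}.) -/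
open MeasureTheory Complex Real
open scoped FourierTransform

noncomputable section

/-- The Poisson kernel of the upper half-plane, `P_y(t) = (1/π) y/(t²+y²)`. -/
def poissonKer (y t : ℝ) : ℝ := (1 / π) * y / (t ^ 2 + y ^ 2)

/-- The convolution `(f * P_y)(x) = ∫ f(t) P_y(x-t) dt`. -/
def poissonConv (f : SchwartzMap ℝ ℂ) (y x : ℝ) : ℂ :=
  ∫ t : ℝ, f t * ((poissonKer y (x - t) : ℝ) : ℂ)

/-!
For fixed `x`, the Poisson summation formula applied to `v ↦ e^{-2π|v|y} e^{2πivx}`, whose Fourier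
transform is `ξ ↦ P_y(x - ξ)`, gives `∑ₖ P_y(x - k) = ∑ₙ e^{-2π|n|y} e^{2πinx}`. Both sides converge
absolutely, with sums of norms at most `∑ₙ e^{-2π|n|y}` for every `x`. This uniform bound permits
replacing `x` by `x - t` and integrating against `f(t) dt` term by term, for any integrable `f`.
-/

section TermwiseIntegration

variable {α ι 𝕜 E : Type*} [MeasurableSpace α] {μ : Measure α} [NormedField 𝕜]
  [NormedAddCommGroup E] [NormedSpace 𝕜 E] {φ : ι → α → 𝕜} {f : α → E} {C : ℝ}

lemma integrable_smul_of_sum_norm_le (hf : Integrable f μ)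
    (hφ : ∀ i, AEStronglyMeasurable (φ i) μ)
    (hC : ∀ᵐ t ∂μ, ∀ s : Finset ι, ∑ i ∈ s, ‖φ i t‖ ≤ C) (i : ι) :
    Integrable (fun t => φ i t • f t) μ :=
  hf.bdd_smul C (hφ i) (hC.mono fun t ht => by simpa using ht {i})

lemma summable_integral_norm_smul (hf : Integrable f μ) (hφ : ∀ i, AEStronglyMeasurable (φ i) μ)
    (hC : ∀ᵐ t ∂μ, ∀ s : Finset ι, ∑ i ∈ s, ‖φ i t‖ ≤ C) :
    Summable fun i => ∫ t, ‖φ i t • f t‖ ∂μ := by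
  have hint i := (integrable_smul_of_sum_norm_le hf hφ hC i).norm
  refine summable_of_sum_le (c := ∫ t, C * ‖f t‖ ∂μ)
    (fun i => integral_nonneg fun t => norm_nonneg _) fun s => ?_
  rw [← integral_finsetSum s fun i _ => hint i]
  refine integral_mono_ae (integrable_finsetSum s fun i _ => hint i) (hf.norm.const_mul C)
    (hC.mono fun t ht => ?_)
  simpa only [norm_smul, Finset.sum_mul] using
    mul_le_mul_of_nonneg_right (ht s) (norm_nonneg (f t))

variable [NormedSpace ℝ E]

lemma summable_norm_integral_smul (hf : Integrable f μ) (hφ : ∀ i, AEStronglyMeasurable (φ i) μ)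
    (hC : ∀ᵐ t ∂μ, ∀ s : Finset ι, ∑ i ∈ s, ‖φ i t‖ ≤ C) :
    Summable fun i => ‖∫ t, φ i t • f t ∂μ‖ :=
  (summable_integral_norm_smul hf hφ hC).of_nonneg_of_le (fun _ => norm_nonneg _)
    fun _ => norm_integral_le_integral_norm _

lemma tsum_integral_smul [Countable ι] [CompleteSpace 𝕜] (hf : Integrable f μ)
    (hφ : ∀ i, AEStronglyMeasurable (φ i) μ)
    (hC : ∀ᵐ t ∂μ, ∀ s : Finset ι, ∑ i ∈ s, ‖φ i t‖ ≤ C) :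
    ∑' i, ∫ t, φ i t • f t ∂μ = ∫ t, (∑' i, φ i t) • f t ∂μ := by
  rw [integral_tsum_of_summable_integral_norm (integrable_smul_of_sum_norm_le hf hφ hC)
    (summable_integral_norm_smul hf hφ hC)]
  refine integral_congr_ae (hC.mono fun t ht => ?_)
  have hφ_summable : Summable fun i => φ i t :=
    (summable_of_sum_le (fun _ => norm_nonneg _) ht).of_norm
  exact hφ_summable.tsum_smul_const (f t)

end TermwiseIntegration

lemma integral_cexp_mul_sub_mul_abs {a b : ℂ} (hb : |b.re| < a.re) :
    ∫ v : ℝ, cexp (b * v - a * |v|) = 2 * a / (a ^ 2 - b ^ 2) := by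
  obtain ⟨hneg, hpos⟩ := abs_lt.mp hb
  have hadd : 0 < (b + a).re := by rw [add_re]; linarith
  have hsub : (b - a).re < 0 := by rw [sub_re]; linarith
  have heq_Iic : Set.EqOn (fun v : ℝ => cexp ((b + a) * v)) (fun v => cexp (b * v - a * |v|))
      (Set.Iic 0) := fun v hv => by
    simp only [abs_of_nonpos (Set.mem_Iic.mp hv), ofReal_neg]
    ring_nf
  have heq_Ioi : Set.EqOn (fun v : ℝ => cexp ((b - a) * v)) (fun v => cexp (b * v - a * |v|))
      (Set.Ioi 0) := fun v hv => by
    simp only [abs_of_pos (Set.mem_Ioi.mp hv)]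
    ring_nf
  rw [← intervalIntegral.integral_Iic_add_Ioi
      ((integrableOn_exp_mul_complex_Iic hadd 0).congr_fun heq_Iic measurableSet_Iic)
      ((integrableOn_exp_mul_complex_Ioi hsub 0).congr_fun heq_Ioi measurableSet_Ioi),
    ← setIntegral_congr_fun measurableSet_Iic heq_Iic,
    ← setIntegral_congr_fun measurableSet_Ioi heq_Ioi,
    integral_exp_mul_complex_Iic hadd, integral_exp_mul_complex_Ioi hsub]
  have hadd_ne : b + a ≠ 0 := fun h => hadd.ne' (by rw [h, zero_re])
  have hsub_ne : b - a ≠ 0 := fun h => hsub.ne (by rw [h, zero_re])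
  have hprod : a ^ 2 - b ^ 2 = -((b + a) * (b - a)) := by ring
  rw [hprod, ofReal_zero, mul_zero, mul_zero, Complex.exp_zero]
  field_simp
  ring

lemma poissonKer_nonneg {y : ℝ} (hy : 0 ≤ y) (t : ℝ) : 0 ≤ poissonKer y t := by
  unfold poissonKer
  positivity

lemma measurable_poissonKer (y : ℝ) : Measurable (poissonKer y) := by
  unfold poissonKer
  fun_prop

/-- The mode `e^{-2π|v|y} e^{2πivx}` of frequency `v` at the point `x + iy`. For `v = n ∈ ℤ` and
`w = e^{2πi(x+iy)}` it is `wⁿ` if `n ≥ 0` and `conj w ^ (-n)` if `n < 0`; real frequencies are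
allowed so that the Poisson summation formula can be applied in `v`. -/
def poissonMode (y x v : ℝ) : ℂ :=
  (Real.exp (-(2 * π * |v| * y)) : ℝ) * cexp (2 * (π : ℂ) * I * (v : ℂ) * (x : ℂ))

lemma continuous_poissonMode_left (y v : ℝ) : Continuous fun x => poissonMode y x v := by
  unfold poissonMode
  fun_prop

lemma continuous_poissonMode (y x : ℝ) : Continuous (poissonMode y x) := by
  unfold poissonMode
  fun_prop

lemma norm_poissonMode (y x v : ℝ) : ‖poissonMode y x v‖ = Real.exp (-(2 * π * |v| * y)) := by
  have hphase : 2 * (π : ℂ) * I * v * x = (2 * π * v * x : ℝ) * I := by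
    push_cast
    ring
  rw [poissonMode, hphase, norm_mul, norm_exp_ofReal_mul_I, mul_one, norm_real,
    Real.norm_of_nonneg (Real.exp_nonneg _)]

lemma integral_poissonMode_sub_smul {E : Type*} [NormedAddCommGroup E] [NormedSpace ℂ E]
    (f : ℝ → E) (y x v : ℝ) :
    ∫ t, poissonMode y (x - t) v • f t = poissonMode y x v • 𝓕 f v := by
  rw [Real.fourier_real_eq_integral_exp_smul, ← integral_smul]
  congr with t
  rw [smul_smul]
  congr 1
  simp only [poissonMode, mul_assoc, ← Complex.exp_add]
  push_cast
  ring_nf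

lemma fourier_poissonMode {y : ℝ} (hy : 0 < y) (x ξ : ℝ) :
    𝓕 (poissonMode y x) ξ = poissonKer y (x - ξ) := by
  have hre : |(2 * π * I * (x - ξ) : ℂ).re| < (2 * π * y : ℂ).re := by
    have : 0 < 2 * π * y := by positivity
    simpa using this
  have hintegrand (v : ℝ) : cexp (↑(-2 * π * v * ξ) * I) • poissonMode y x v =
      cexp (2 * π * I * (x - ξ) * v - 2 * π * y * |v|) := by
    rw [poissonMode, smul_eq_mul, ofReal_exp, ← Complex.exp_add, ← Complex.exp_add]
    push_cast
    ring_nf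
  have hden : ((x : ℂ) - ξ) ^ 2 + (y : ℂ) ^ 2 ≠ 0 := by
    have : (x - ξ) ^ 2 + y ^ 2 ≠ 0 := by positivity
    exact_mod_cast this
  have hsq : (2 * π * y : ℂ) ^ 2 - (2 * π * I * (x - ξ)) ^ 2 =
      4 * π ^ 2 * ((x - ξ) ^ 2 + y ^ 2) := by
    linear_combination -4 * π ^ 2 * ((x : ℂ) - ξ) ^ 2 * I_sq
  rw [Real.fourier_real_eq_integral_exp_smul, integral_congr_ae (.of_forall hintegrand),
    integral_cexp_mul_sub_mul_abs hre, hsq, poissonKer]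
  have hpi : (π : ℂ) ≠ 0 := ofReal_ne_zero.mpr pi_ne_zero
  push_cast
  field_simp
  ring

lemma isBigO_poissonMode_cocompact {y : ℝ} (hy : 0 < y) (x s : ℝ) :
    poissonMode y x =O[Filter.cocompact ℝ] fun v => |v| ^ s := by
  have hrate : 0 < 2 * π * y := by positivity
  refine (((isLittleO_exp_neg_mul_rpow_atTop hrate s).comp_tendsto
    (tendsto_norm_cocompact_atTop (E := ℝ))).isBigO.congr_left fun v => ?_).of_norm_left
  rw [norm_poissonMode, Function.comp_apply, Real.norm_eq_abs]
  ring_nf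

lemma summable_poissonMode_int {y : ℝ} (hy : 0 < y) (x : ℝ) :
    Summable fun n : ℤ => poissonMode y x n :=
  summable_of_isBigO (Real.summable_abs_int_rpow one_lt_two)
    ((isBigO_poissonMode_cocompact hy x (-2)).comp_tendsto Int.tendsto_coe_cofinite)

lemma summable_poissonKer_sub_int (y x : ℝ) :
    Summable fun k : ℤ => poissonKer y (x - k) := by
  -- `P_y(x - k) = (y/π) / |k - x + iy|²`
  have hsum := (EisensteinSeries.linear_right_summable (-x + y * I) 1 le_rfl).norm.mul_left (y / π)
  refine hsum.congr fun k => ?_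
  have hnorm : ‖(1 : ℤ) * (-x + y * I) + (k : ℂ)‖ ^ 2 = (x - k) ^ 2 + y ^ 2 := by
    have hsplit : (1 : ℤ) * (-x + y * I) + (k : ℂ) = (k - x : ℝ) + y * I := by
      push_cast
      ring
    rw [hsplit, norm_add_mul_I, Real.sq_sqrt (by positivity)]
    ring
  rw [norm_inv, zpow_ofNat, norm_pow, hnorm, poissonKer]
  ring

lemma tsum_poissonKer_sub_int {y : ℝ} (hy : 0 < y) (x : ℝ) :
    ∑' k : ℤ, (poissonKer y (x - k) : ℂ) = ∑' n : ℤ, poissonMode y x n := by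
  have hfourier : Summable fun k : ℤ => 𝓕 (poissonMode y x) k := by
    simpa only [fourier_poissonMode hy] using summable_ofReal.mpr (summable_poissonKer_sub_int y x)
  have hpoisson := Real.tsum_eq_tsum_fourier_of_rpow_decay_of_summable
    (continuous_poissonMode y x) one_lt_two (isBigO_poissonMode_cocompact hy x (-2)) hfourier 0
  simpa [fourier_poissonMode hy] using hpoisson.symm

lemma sum_norm_poissonMode_le {y : ℝ} (hy : 0 < y) (x : ℝ) (s : Finset ℤ) :
    ∑ n ∈ s, ‖poissonMode y x n‖ ≤ ∑' n : ℤ, Real.exp (-(2 * π * |(n : ℝ)| * y)) := by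
  have hsum := (summable_poissonMode_int hy x).norm
  simp only [norm_poissonMode] at hsum ⊢
  exact hsum.sum_le_tsum s fun _ _ => Real.exp_nonneg _

lemma sum_norm_poissonKer_sub_int_le {y : ℝ} (hy : 0 < y) (x : ℝ) (s : Finset ℤ) :
    ∑ k ∈ s, ‖(poissonKer y (x - k) : ℂ)‖ ≤ ∑' n : ℤ, Real.exp (-(2 * π * |(n : ℝ)| * y)) := by
  have hnonneg (k : ℤ) : 0 ≤ poissonKer y (x - k) := poissonKer_nonneg hy.le _
  simp only [norm_real, Real.norm_of_nonneg (hnonneg _)]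
  calc ∑ k ∈ s, poissonKer y (x - k)
      ≤ ∑' k : ℤ, poissonKer y (x - k) :=
        (summable_poissonKer_sub_int y x).sum_le_tsum s fun k _ => hnonneg k
    _ = ‖∑' n : ℤ, poissonMode y x n‖ := by
        rw [← tsum_poissonKer_sub_int hy, ← ofReal_tsum, norm_real,
          Real.norm_of_nonneg (tsum_nonneg hnonneg)]
    _ ≤ ∑' n : ℤ, ‖poissonMode y x n‖ :=
        norm_tsum_le_tsum_norm (summable_poissonMode_int hy x).norm
    _ = ∑' n : ℤ, Real.exp (-(2 * π * |(n : ℝ)| * y)) := by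
        simp only [norm_poissonMode]

theorem stmt_12_general {E : Type*} [NormedAddCommGroup E] [NormedSpace ℂ E] [CompleteSpace E]
    {f : ℝ → E} (hf : Integrable f) (x : ℝ) {y : ℝ} (hy : 0 < y) :
    Summable (fun k : ℤ => ‖∫ t, (poissonKer y (x - k - t) : ℂ) • f t‖) ∧
    Summable (fun n : ℤ => ‖poissonMode y x n • 𝓕 f n‖) ∧
    ∑' k : ℤ, ∫ t, (poissonKer y (x - k - t) : ℂ) • f t =
      ∑' n : ℤ, poissonMode y x n • 𝓕 f n := by
  have hker_meas (k : ℤ) :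
      AEStronglyMeasurable fun t => (poissonKer y (x - t - k) : ℂ) :=
    (measurable_ofReal.comp ((measurable_poissonKer y).comp (by fun_prop))).aestronglyMeasurable
  have hmode_meas (n : ℤ) : AEStronglyMeasurable fun t => poissonMode y (x - t) n :=
    ((continuous_poissonMode_left y n).comp (by fun_prop)).aestronglyMeasurable
  have hker_le := ae_of_all volume fun t => sum_norm_poissonKer_sub_int_le hy (x - t)
  have hmode_le := ae_of_all volume fun t => sum_norm_poissonMode_le hy (x - t)
  simp only [sub_right_comm x _, ← integral_poissonMode_sub_smul]
  refine ⟨summable_norm_integral_smul hf hker_meas hker_le,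
    summable_norm_integral_smul hf hmode_meas hmode_le, ?_⟩
  rw [tsum_integral_smul hf hker_meas hker_le, tsum_integral_smul hf hmode_meas hmode_le]
  simp only [tsum_poissonKer_sub_int hy]

/-- For Schwartz `f`, `x ∈ ℝ` and `y > 0`, both series converge absolutely and
`Σ_{k∈ℤ} (f * P_y)(x-k) = Σ_{n∈ℤ} f̂(n) e^{-2π|n|y} e^{2πinx}`. -/
theorem stmt_12 (f : SchwartzMap ℝ ℂ) (x y : ℝ) (hy : 0 < y) :
    Summable (fun k : ℤ => ‖poissonConv f y (x - (k : ℝ))‖) ∧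
    Summable (fun n : ℤ =>
      ‖𝓕 ⇑f (n : ℝ) * ((Real.exp (-(2 * π * |(n : ℝ)| * y)) : ℝ) : ℂ) *
        Complex.exp (2 * (π : ℂ) * Complex.I * (n : ℂ) * (x : ℂ))‖) ∧
    (∑' k : ℤ, poissonConv f y (x - (k : ℝ)))
      = ∑' n : ℤ, 𝓕 ⇑f (n : ℝ) * ((Real.exp (-(2 * π * |(n : ℝ)| * y)) : ℝ) : ℂ) *
          Complex.exp (2 * (π : ℂ) * Complex.I * (n : ℂ) * (x : ℂ)) := by
  simpa only [poissonConv, poissonMode, smul_eq_mul, mul_comm, mul_left_comm, mul_assoc,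
    ofReal_intCast] using stmt_12_general f.integrable x hy
end
end
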